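/- arXiv:2412.21032 — 8 statements merged into one kernel-verified Lean document; each statement's English description precedes it below -/
import Mathlib

section
/- In any 2-crossed module (L →δ H →∂ G, ▷, {·,·}_p), the map ▷' : H × L → L defined by h ▷' l = l · {δ(l)⁻¹, h}_p is a left action of the group H on L: for all l ∈ L one has 1_H ▷' l = l, and for all h₁, h₂ ∈ H and l ∈ L one has (h₁h₂) ▷' l = h₁ ▷' (h₂ ▷' l). -/
/-- A 2-crossed module `(L --δ--> H --∂--> G, ▷, Peiffer lifting)`:
groups `G H L`, homomorphisms `δ : L → H` (field `δ`) and `∂ : H → G` (field `bd`)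
with `∂ ∘ δ = 1`, left actions `▷` of `G` on `H` and `L` by automorphisms
(fields `actH`, `actL`; `G` acts on itself by conjugation), and the Peiffer
lifting `{·,·}_p : H × H → L` (field `pf`), subject to the usual axioms. -/
structure TwoCrossedModule (G H L : Type*) [Group G] [Group H] [Group L] where
  δ : L →* H
  bd : H →* G
  actH : G →* MulAut H
  actL : G →* MulAut L
  pf : H → H → L
  comp_eq_one : ∀ l : L, bd (δ l) = 1
  -- (i) g ▷ ∂(h) = ∂(g ▷ h), where G acts on itself by conjugation
  act_bd : ∀ (g : G) (h : H), g * bd h * g⁻¹ = bd (actH g h)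
  -- (i) g ▷ δ(l) = δ(g ▷ l)
  act_δ : ∀ (g : G) (l : L), actH g (δ l) = δ (actL g l)
  -- (ii) g ▷ {h₁,h₂}_p = {g ▷ h₁, g ▷ h₂}_p
  act_pf : ∀ (g : G) (h₁ h₂ : H), actL g (pf h₁ h₂) = pf (actH g h₁) (actH g h₂)
  -- (iii) δ({h₁,h₂}_p) = h₁h₂h₁⁻¹·(∂(h₁) ▷ h₂⁻¹)
  δ_pf : ∀ h₁ h₂ : H, δ (pf h₁ h₂) = h₁ * h₂ * h₁⁻¹ * actH (bd h₁) h₂⁻¹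
  -- (iv) {δ(l₁), δ(l₂)}_p = l₁l₂l₁⁻¹l₂⁻¹
  pf_δ_δ : ∀ l₁ l₂ : L, pf (δ l₁) (δ l₂) = l₁ * l₂ * l₁⁻¹ * l₂⁻¹
  -- (v) {h₁h₂, h₃}_p = {h₁, h₂h₃h₂⁻¹}_p · (∂(h₁) ▷ {h₂,h₃}_p)
  pf_mul_left : ∀ h₁ h₂ h₃ : H,
    pf (h₁ * h₂) h₃ = pf h₁ (h₂ * h₃ * h₂⁻¹) * actL (bd h₁) (pf h₂ h₃)
  -- (vi) {h₁, h₂h₃}_p = {h₁,h₂}_p · {h₁,h₃}_p · {⟨h₁,h₃⟩_p⁻¹, ∂(h₁) ▷ h₂}_p,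
  -- where ⟨h₁,h₃⟩_p = h₁h₃h₁⁻¹·(∂(h₁) ▷ h₃⁻¹) is the Peiffer commutator
  pf_mul_right : ∀ h₁ h₂ h₃ : H,
    pf h₁ (h₂ * h₃) = pf h₁ h₂ * pf h₁ h₃ *
      pf (h₁ * h₃ * h₁⁻¹ * actH (bd h₁) h₃⁻¹)⁻¹ (actH (bd h₁) h₂)
  -- (vii) {δ(l), h}_p · {h, δ(l)}_p = l·(∂(h) ▷ l⁻¹)
  pf_δ : ∀ (h : H) (l : L), pf (δ l) h * pf h (δ l) = l * actL (bd h) l⁻¹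

namespace TwoCrossedModule

variable {G H L : Type*} [Group G] [Group H] [Group L]

/-- The map `▷' : H × L → L`, defined by `h ▷' l = l · {δ(l)⁻¹, h}_p`. -/
def act' (X : TwoCrossedModule G H L) (h : H) (l : L) : L :=
  l * X.pf (X.δ l)⁻¹ h

end TwoCrossedModule

/-- In any 2-crossed module, `▷'` is a left action of `H` on `L`:
`1 ▷' l = l` and `(h₁h₂) ▷' l = h₁ ▷' (h₂ ▷' l)`. -/
theorem act'_is_action {G H L : Type*} [Group G] [Group H] [Group L]
    (X : TwoCrossedModule G H L) :
    (∀ l : L, X.act' 1 l = l) ∧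
    (∀ (h₁ h₂ : H) (l : L), X.act' (h₁ * h₂) l = X.act' h₁ (X.act' h₂ l)) := by
  have hb : ∀ l : L, X.bd (X.δ l)⁻¹ = 1 := fun l => by rw [map_inv, X.comp_eq_one, inv_one]
  have hd : ∀ (l : L) (h : H),
      X.δ (X.pf (X.δ l)⁻¹ h) = (X.δ l)⁻¹ * h * X.δ l * h⁻¹ := fun l h => by
    rw [X.δ_pf, hb]; simp
  have hr : ∀ (l : L) (h₁ h₂ : H), X.pf (X.δ l)⁻¹ (h₁ * h₂) =
      X.pf (X.δ l)⁻¹ h₁ * X.pf (X.δ l)⁻¹ h₂ *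
        X.pf (X.δ (X.pf (X.δ l)⁻¹ h₂))⁻¹ h₁ := fun l h₁ h₂ => by
    rw [X.pf_mul_right, ← X.δ_pf, hb]; simp
  constructor
  · intro l
    have h1 : X.pf 1 1 = 1 := by
      have := X.pf_δ_δ 1 1
      simpa using this
    have h := hr l 1 1
    have h2 : X.δ (X.pf (X.δ l)⁻¹ 1) = 1 := by rw [hd]; simp
    rw [h2, inv_one, h1, mul_one, mul_one] at h
    simp only [TwoCrossedModule.act']
    rw [mul_eq_left.mp h.symm, mul_one]
  · intro h₁ h₂ l
    simp only [TwoCrossedModule.act']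
    rw [hr, map_mul, mul_inv_rev, X.pf_mul_left, hb, inv_inv]
    have hn := hd l h₁
    have e : (X.δ l)⁻¹ * h₁ * X.δ l = X.δ (X.pf (X.δ l)⁻¹ h₁) * h₁ := by rw [hn]; group
    rw [e]
    generalize X.pf (X.δ l)⁻¹ h₁ = n
    generalize X.pf (X.δ l)⁻¹ h₂ = m
    rw [hr]
    generalize X.pf (X.δ m)⁻¹ h₁ = k
    rw [← map_inv, ← map_inv, X.pf_δ_δ, X.pf_δ_δ, map_one, MulAut.one_apply]
    group
end

section
/- In any 2-crossed module (L →δ H →∂ G, ▷, {·,·}_p), the map ▷' acts by group automorphisms: for all h ∈ H and l₁, l₂ ∈ L one has h ▷' (l₁l₂) = (h ▷' l₁) · (h ▷' l₂). -/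
/-- In any 2-crossed module, `▷'` acts by group automorphisms:
`h ▷' (l₁l₂) = (h ▷' l₁) · (h ▷' l₂)`. -/
theorem act'_mul {G H L : Type*} [Group G] [Group H] [Group L]
    (X : TwoCrossedModule G H L) (h : H) (l₁ l₂ : L) :
    X.act' h (l₁ * l₂) = X.act' h l₁ * X.act' h l₂ := by
  have key : ∀ a b : L, X.pf (X.δ b * X.δ a) h
      = b * X.pf (X.δ a) h * b⁻¹ * X.pf (X.δ b) h := by
    intro a b
    have hδ : ∀ c : L, X.δ (X.pf (X.δ c) h) = X.δ c * h * (X.δ c)⁻¹ * h⁻¹ := by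
      intro c
      rw [X.δ_pf, X.comp_eq_one, map_one, MulAut.one_apply]
    have e : X.δ a * h * (X.δ a)⁻¹ = X.δ (X.pf (X.δ a) h) * h := by
      rw [hδ]; group
    rw [X.pf_mul_left, e, X.pf_mul_right, X.comp_eq_one, map_one, map_one,
      MulAut.one_apply, MulAut.one_apply, MulAut.one_apply, ← hδ b, ← map_inv,
      X.pf_δ_δ, X.pf_δ_δ]
    group
  unfold TwoCrossedModule.act'
  have k := key l₁⁻¹ l₂⁻¹
  rw [map_mul, mul_inv_rev, ← map_inv, ← map_inv, k]
  group
end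

section
/- In any 2-crossed module (L →δ H →∂ G, ▷, {·,·}_p), the homomorphism δ is equivariant for the action ▷': for all h ∈ H and l ∈ L one has δ(h ▷' l) = h · δ(l) · h⁻¹. -/
/-- In any 2-crossed module, `δ` is equivariant for the action `▷'`:
`δ(h ▷' l) = h · δ(l) · h⁻¹`. -/
theorem δ_act' {G H L : Type*} [Group G] [Group H] [Group L]
    (X : TwoCrossedModule G H L) (h : H) (l : L) :
    X.δ (X.act' h l) = h * X.δ l * h⁻¹ := by
  simp [TwoCrossedModule.act', X.δ_pf, X.comp_eq_one, mul_assoc]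
end

section
/- In any 2-crossed module (L →δ H →∂ G, ▷, {·,·}_p), for every h ∈ H and l ∈ L one has {h, δ(l)⁻¹}_p = (h ▷' l⁻¹) · (∂(h) ▷ l). -/
/-- In any 2-crossed module, `{h, δ(l)⁻¹}_p = (h ▷' l⁻¹) · (∂(h) ▷ l)`. -/
theorem pf_δ_inv {G H L : Type*} [Group G] [Group H] [Group L]
    (X : TwoCrossedModule G H L) (h : H) (l : L) :
    X.pf h (X.δ l)⁻¹ = X.act' h l⁻¹ * X.actL (X.bd h) l := by
  have h1 : ∀ x : H, X.pf 1 x = 1 := by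
    intro x
    have := X.pf_mul_left 1 1 x
    simpa using this
  obtain ⟨m, rfl⟩ : ∃ m : L, l = m⁻¹ := ⟨l⁻¹, by simp⟩
  have e1 : X.pf (X.δ m) (X.δ m) = 1 := by rw [X.pf_δ_δ]; group
  have e2 : X.pf (X.δ m) (X.δ m)⁻¹ = 1 := by rw [← map_inv, X.pf_δ_δ]; group
  have e3 : X.pf (X.δ m) (h * X.δ m) = X.pf (X.δ m) h := by
    rw [X.pf_mul_right, e1, X.comp_eq_one]
    simp [h1]
  have e4 : X.pf (X.δ m) ((X.δ m)⁻¹ * (h * X.δ m)) = m⁻¹ * X.pf (X.δ m) h * m := by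
    rw [X.pf_mul_right, e2, ← X.δ_pf, e3, X.comp_eq_one, ← map_inv, map_one,
      ← map_inv, MulAut.one_apply, X.pf_δ_δ]
    group
  have e5 := X.pf_mul_left (X.δ m) (X.δ m)⁻¹ h
  rw [mul_inv_cancel, h1, X.comp_eq_one, map_one, MulAut.one_apply, inv_inv, mul_assoc, e4] at e5
  have e6 := X.pf_δ h m
  have e7 : X.pf (X.δ m)⁻¹ h = m⁻¹ * (X.pf (X.δ m) h)⁻¹ * m := by
    rw [← inv_eq_of_mul_eq_one_right e5.symm]; group
  have e8 : X.pf h (X.δ m) = (X.pf (X.δ m) h)⁻¹ * (m * X.actL (X.bd h) m⁻¹) := by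
    rw [← e6]; group
  simp only [TwoCrossedModule.act', map_inv, inv_inv] at e8 ⊢
  rw [e7, e8]
  group
end

section
/- In any 2-crossed module (L →δ H →∂ G, ▷, {·,·}_p), for all h₁, h₂, h₃ ∈ H one has {h₁h₂, h₃}_p = (h₁ ▷' {h₂, h₃}_p) · {h₁, ∂(h₂) ▷ h₃}_p. -/
namespace TwoCrossedModule

theorem pf_δ_mul {G H L : Type*} [Group G] [Group H] [Group L]
    (X : TwoCrossedModule G H L) (h k : H) (l : L) :
    X.pf h (X.δ l * k) =
      X.pf h (X.δ l) * X.actL (X.bd h) l * X.pf h k * (X.actL (X.bd h) l)⁻¹ := by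
  rw [X.pf_mul_right, ← X.δ_pf, X.act_δ, ← map_inv, X.pf_δ_δ]
  group

theorem pf_one {G H L : Type*} [Group G] [Group H] [Group L]
    (X : TwoCrossedModule G H L) (h : H) : X.pf h 1 = 1 := by
  have e := X.pf_δ_mul h 1 1
  simpa using e

theorem act'_eq {G H L : Type*} [Group G] [Group H] [Group L]
    (X : TwoCrossedModule G H L) (h : H) (l : L) :
    X.act' h l = X.pf h (X.δ l) * X.actL (X.bd h) l := by
  have e := X.pf_δ_mul h (X.δ l⁻¹) l
  rw [← map_mul, mul_inv_cancel, map_one, X.pf_one] at e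
  have f := X.pf_δ h l⁻¹
  rw [inv_inv] at f
  rw [act', ← map_inv]
  rw [← eq_mul_inv_iff_mul_eq] at f
  have e2 : (X.pf h (X.δ l⁻¹))⁻¹ =
      (X.actL (X.bd h) l)⁻¹ * (X.pf h (X.δ l) * X.actL (X.bd h) l) := by
    generalize X.pf h (X.δ l⁻¹) = p at *
    generalize X.pf h (X.δ l) = q at *
    generalize X.actL (X.bd h) l = r at *
    have e3 : p = r⁻¹ * q⁻¹ * r := by
      calc p = r⁻¹ * q⁻¹ * (q * r * p * r⁻¹) * r := by group
        _ = _ := by rw [← e]; group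
    rw [e3]; group
  rw [f, e2]
  group

end TwoCrossedModule

/-- In any 2-crossed module,
`{h₁h₂, h₃}_p = (h₁ ▷' {h₂, h₃}_p) · {h₁, ∂(h₂) ▷ h₃}_p`. -/
theorem pf_mul_left' {G H L : Type*} [Group G] [Group H] [Group L]
    (X : TwoCrossedModule G H L) (h₁ h₂ h₃ : H) :
    X.pf (h₁ * h₂) h₃ = X.act' h₁ (X.pf h₂ h₃) * X.pf h₁ (X.actH (X.bd h₂) h₃) := by
  have e : h₂ * h₃ * h₂⁻¹ = X.δ (X.pf h₂ h₃) * X.actH (X.bd h₂) h₃ := by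
    rw [X.δ_pf, map_inv]; group
  rw [X.pf_mul_left, e, X.pf_δ_mul, X.act'_eq]
  group
end

section
/- In any 2-crossed module (L →δ H →∂ G, ▷, {·,·}_p), for all h₁, h₂ ∈ H one has {h₁, h₂}_p⁻¹ = (h₁h₂h₁⁻¹) ▷' {h₁, h₂⁻¹}_p. -/
theorem aux_pf_one_left {G H L : Type*} [Group G] [Group H] [Group L]
    (X : TwoCrossedModule G H L) (h : H) : X.pf 1 h = 1 := by
  have := X.pf_mul_left 1 1 h
  simpa using this

theorem aux_pf_one_right {G H L : Type*} [Group G] [Group H] [Group L]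
    (X : TwoCrossedModule G H L) (h : H) : X.pf h 1 = 1 := by
  have := X.pf_mul_right h 1 1
  simpa [aux_pf_one_left] using this

/-- In any 2-crossed module, `{h₁, h₂}_p⁻¹ = (h₁h₂h₁⁻¹) ▷' {h₁, h₂⁻¹}_p`. -/
theorem pf_inv_eq_act'_conj {G H L : Type*} [Group G] [Group H] [Group L]
    (X : TwoCrossedModule G H L) (h₁ h₂ : H) :
    (X.pf h₁ h₂)⁻¹ = X.act' (h₁ * h₂ * h₁⁻¹) (X.pf h₁ h₂⁻¹) := by
  have key : ∀ (l : L) (a : H), X.pf (X.δ l)⁻¹ (a * X.δ l) = X.pf (X.δ l)⁻¹ a := by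
    intro l a
    have h1 : X.pf (X.δ l)⁻¹ (X.δ l) = 1 := by
      rw [← map_inv, X.pf_δ_δ]; group
    rw [X.pf_mul_right, h1, ← X.δ_pf, h1]
    simp [X.comp_eq_one, aux_pf_one_left]
  have h := X.pf_mul_right h₁ h₂ h₂⁻¹
  rw [← X.δ_pf, mul_inv_cancel, aux_pf_one_right] at h
  have hb : X.actH (X.bd h₁) h₂ = h₁ * h₂ * h₁⁻¹ * X.δ (X.pf h₁ h₂⁻¹) := by
    rw [X.δ_pf, inv_inv]; group
  rw [hb, key, mul_assoc] at h
  exact inv_eq_of_mul_eq_one_right h.symm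
end

section
/- In any 2-crossed module (L →δ H →∂ G, ▷, {·,·}_p), for all h₁, h₂, h₃ ∈ H one has {h₁, h₂h₃}_p⁻¹ = ((∂(h₁) ▷ h₂) ▷' {h₁, h₃}_p⁻¹) · {h₁, h₂}_p⁻¹. -/
theorem pf_aux_one_left {G H L : Type*} [Group G] [Group H] [Group L]
    (X : TwoCrossedModule G H L) (k : H) : X.pf 1 k = 1 := by
  have h := X.pf_mul_left 1 1 k
  simpa using h

theorem pf_aux_conj {G H L : Type*} [Group G] [Group H] [Group L]
    (X : TwoCrossedModule G H L) (B : L) (k : H) :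
    X.pf (X.δ B⁻¹) (X.δ B * (k * X.δ B⁻¹)) = B * X.pf (X.δ B⁻¹) k * B⁻¹ := by
  have hP : X.pf (X.δ B⁻¹) (k * X.δ B⁻¹) = X.pf (X.δ B⁻¹) k := by
    rw [X.pf_mul_right, ← X.δ_pf, X.pf_δ_δ]
    simp [pf_aux_one_left]
  rw [X.pf_mul_right, ← X.δ_pf, hP, X.comp_eq_one, X.pf_δ_δ, ← map_inv X.δ]
  simp only [map_one, MulAut.one_apply]
  rw [X.pf_δ_δ]
  group

/-- In any 2-crossed module,
`{h₁, h₂h₃}_p⁻¹ = ((∂(h₁) ▷ h₂) ▷' {h₁, h₃}_p⁻¹) · {h₁, h₂}_p⁻¹`. -/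
theorem pf_mul_inv {G H L : Type*} [Group G] [Group H] [Group L]
    (X : TwoCrossedModule G H L) (h₁ h₂ h₃ : H) :
    (X.pf h₁ (h₂ * h₃))⁻¹ =
      X.act' (X.actH (X.bd h₁) h₂) (X.pf h₁ h₃)⁻¹ * (X.pf h₁ h₂)⁻¹ := by
  unfold TwoCrossedModule.act'
  rw [X.pf_mul_right, ← X.δ_pf]
  generalize X.pf h₁ h₃ = B
  generalize X.actH (X.bd h₁) h₂ = k
  have h := X.pf_mul_left (X.δ B⁻¹) (X.δ B) k
  rw [← map_mul, inv_mul_cancel, map_one, pf_aux_one_left, X.comp_eq_one,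
    ← map_inv X.δ, mul_assoc, pf_aux_conj] at h
  simp only [map_one, MulAut.one_apply] at h
  rw [← map_inv X.δ, ← map_inv X.δ, inv_inv, eq_inv_of_mul_eq_one_right h.symm]
  group
end

section
/- In any 2-crossed module (L →δ H →∂ G, ▷, {·,·}_p), for every h ∈ H and l ∈ L one has h ▷' l = {h, δ(l)}_p · (∂(h) ▷ l). -/
/-- In any 2-crossed module, `h ▷' l = {h, δ(l)}_p · (∂(h) ▷ l)`. -/
theorem act'_eq_pf_mul_act {G H L : Type*} [Group G] [Group H] [Group L]
    (X : TwoCrossedModule G H L) (h : H) (l : L) :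
    X.act' h l = X.pf h (X.δ l) * X.actL (X.bd h) l := by
  have one : ∀ k : H, X.pf 1 k = 1 := by
    intro k
    have := X.pf_mul_left 1 1 k
    simpa using this
  have hm : X.pf (X.δ l) (h * X.δ l) = X.pf (X.δ l) h := by
    rw [X.pf_mul_right, X.pf_δ_δ, X.comp_eq_one]
    simp [one]
  have hδ := X.δ_pf (X.δ l) (h * X.δ l)
  have hc : X.pf (X.δ l) ((X.δ l)⁻¹ * (h * X.δ l)) = l⁻¹ * X.pf (X.δ l) h * l := by
    rw [X.pf_mul_right, ← hδ, hm, X.comp_eq_one, ← map_inv, ← map_inv, X.pf_δ_δ, map_one,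
      MulAut.one_apply, X.pf_δ_δ]
    group
  have h1 := X.pf_mul_left (X.δ l) (X.δ l)⁻¹ h
  rw [mul_inv_cancel, one, inv_inv, mul_assoc, hc, X.comp_eq_one, map_one,
    MulAut.one_apply] at h1
  have h7 := X.pf_δ h l
  rw [map_inv] at h7
  unfold TwoCrossedModule.act'
  have e1 : X.pf (X.δ l)⁻¹ h = (l⁻¹ * X.pf (X.δ l) h * l)⁻¹ :=
    eq_inv_of_mul_eq_one_right h1.symm
  have e2 : X.pf h (X.δ l) = (X.pf (X.δ l) h)⁻¹ * (l * (X.actL (X.bd h) l)⁻¹) :=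
    eq_inv_mul_of_mul_eq h7
  rw [e1, e2]
  group
end
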